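/- Under Assumptions 1 and 2, for any R > 0 there exists a constant ε(R) > 0 such that for every t ≥ 1 at which W(t) ∈ B(R), the gradient flow satisfies ‖∂R/∂W_1(t)‖_F ≥ ε(R). Consequently, for every R > 0 the Lebesgue measure of the set {t ≥ 0 : W(t) ∈ B(R)} is finite, and sup_{t≥0} max_{1≤k≤L} ‖W_k(t)‖_F = ∞. -/

import Mathlib

/-!
Along the flow the risk satisfies `d/dt R(W(t)) = -‖∇R(W(t))‖²` (`hasDerivAt_riskW`), so it is
nonincreasing, and since the gradient is nonzero at time `0` it lies strictly below `ℓ 0` by a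
fixed margin from time `1` on (`riskW_one_lt`).

A risk below `ℓ 0` by a fixed margin forces some `⟨w_prod, zᵢ⟩`, hence `‖w_prod‖`, to be bounded
below (`exists_le_vecNorm_of_risk_le`). When `‖W_1‖ ≤ R`, the inequality
`‖w_prod‖ ≤ ‖W_L ⋯ W_2‖ ‖W_1‖` then bounds `‖W_L ⋯ W_2‖` below. When all layers are bounded, so
is `w_prod`, and compactness together with separability bounds `‖∇R(w_prod)‖` below
(`exists_le_vecNorm_gradRiskV`). Because the output dimension is one, `‖∂R/∂W_1‖` is the product
of these two norms (`frobNorm_gradLayer_zero`), which gives `ε(R)`.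

Finally, the risk is nonnegative, so `‖∇R(W(t))‖²` is integrable on `(0, ∞)`
(`integrableOn_gradNormSq`), and Markov's inequality bounds the time during which it is at least
`ε(R)²`. If the weights stayed bounded forever, that time would be infinite.

Layers are numbered from one in this overview and from zero in the formal statements and their
docstrings.
-/

open Matrix Filter
open scoped BigOperators

noncomputable section

/-- Euclidean norm of a vector in `ℝ^m`. -/
def vecNorm {m : Type*} [Fintype m] (v : m → ℝ) : ℝ :=
  Real.sqrt (∑ i, (v i) ^ 2)

/-- Frobenius norm of a real matrix. -/
def frobNorm {m n : Type*} [Fintype m] [Fintype n] (M : Matrix m n ℝ) : ℝ :=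
  Real.sqrt (∑ i, ∑ j, (M i j) ^ 2)

/-- Spectral norm (operator 2-norm) of a real matrix. -/
def specNorm {m n : Type*} [Fintype m] [Fintype n] (M : Matrix m n ℝ) : ℝ :=
  sSup {c : ℝ | ∃ v : n → ℝ, vecNorm v = 1 ∧ c = vecNorm (M.mulVec v)}

/-- `(u, v)` is a top singular vector pair of `M`: both are unit vectors,
`M v = ‖M‖₂ u` and `Mᵀ u = ‖M‖₂ v`. -/
def IsTopSingularPair {m n : Type*} [Fintype m] [Fintype n]
    (M : Matrix m n ℝ) (u : m → ℝ) (v : n → ℝ) : Prop :=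
  vecNorm u = 1 ∧ vecNorm v = 1 ∧
    M.mulVec v = specNorm M • u ∧ Mᵀ.mulVec u = specNorm M • v

/-- Parameters of a deep linear network: layer `k` (0-indexed; paper layer `k+1`)
is a matrix mapping `ℝ^{dim k}` to `ℝ^{dim (k+1)}`. -/
abbrev Layers (dim : ℕ → ℕ) := ∀ j : ℕ, Matrix (Fin (dim (j+1))) (Fin (dim j)) ℝ

/-- Product `W_{j-1} ⋯ W_0` of the bottom `j` layers (paper: `W_j ⋯ W_1`). -/
def prodUpTo {dim : ℕ → ℕ} (W : Layers dim) : ∀ j : ℕ, Matrix (Fin (dim j)) (Fin (dim 0)) ℝ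
  | 0 => 1
  | (j+1) => W j * prodUpTo W j

/-- Product `W_{L-1} ⋯ W_j` of the layers from `j` up to the top layer `L-1`
(paper: `W_L ⋯ W_{j+1}`); for `j ≥ L` it is a pseudo-identity. -/
def prodFrom {dim : ℕ → ℕ} (L : ℕ) (W : Layers dim) (j : ℕ) :
    Matrix (Fin (dim L)) (Fin (dim j)) ℝ :=
  if h : j < L then prodFrom L W (j+1) * W j
  else Matrix.of fun i j' => if (i : ℕ) = (j' : ℕ) then 1 else 0
  termination_by L - j
  decreasing_by omega

/-- The linear predictor `w_prod = (W_L ⋯ W_1)ᵀ ∈ ℝ^d` induced by the network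
(recall `dim L = 1`). -/
def wprod {dim : ℕ → ℕ} (L : ℕ) (W : Layers dim) : Fin (dim 0) → ℝ :=
  fun j => ∑ a, prodUpTo W L a j

/-- Empirical risk of a linear predictor `w`: `R(w) = (1/n) ∑ᵢ ℓ(⟨w, zᵢ⟩)`. -/
def riskV {n d : ℕ} (ℓ : ℝ → ℝ) (z : Fin n → Fin d → ℝ) (w : Fin d → ℝ) : ℝ :=
  (n : ℝ)⁻¹ * ∑ i, ℓ (w ⬝ᵥ z i)

/-- Gradient of the risk w.r.t. the linear predictor: `∇R(w) = (1/n) ∑ᵢ ℓ'(⟨w, zᵢ⟩) zᵢ`. -/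
def gradRiskV {n d : ℕ} (ℓ' : ℝ → ℝ) (z : Fin n → Fin d → ℝ) (w : Fin d → ℝ) :
    Fin d → ℝ :=
  (n : ℝ)⁻¹ • ∑ i, ℓ' (w ⬝ᵥ z i) • z i

/-- The partial gradient of the empirical risk with respect to layer `k`:
`∂R/∂W_k = (W_L ⋯ W_{k+1})ᵀ ∇R(w_prod)ᵀ (W_{k-1} ⋯ W_1)ᵀ`. -/
def gradLayer {dim : ℕ → ℕ} (L : ℕ) (ℓ' : ℝ → ℝ) {n : ℕ}
    (z : Fin n → Fin (dim 0) → ℝ) (W : Layers dim) (k : ℕ) :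
    Matrix (Fin (dim (k+1))) (Fin (dim k)) ℝ :=
  (prodFrom L W (k+1))ᵀ *
    (Matrix.of fun (_ : Fin (dim L)) (j : Fin (dim 0)) => gradRiskV ℓ' z (wprod L W) j) *
    (prodUpTo W k)ᵀ

/-- Empirical risk of the network. -/
def riskW {dim : ℕ → ℕ} (L : ℕ) (ℓ : ℝ → ℝ) {n : ℕ}
    (z : Fin n → Fin (dim 0) → ℝ) (W : Layers dim) : ℝ :=
  riskV ℓ z (wprod L W)

/-- Gradient flow: `dW(t)/dt = −∇R(W(t))` for all `t ≥ 0`, entrywise on each layer. -/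
def IsGradientFlow {dim : ℕ → ℕ} (L : ℕ) (ℓ' : ℝ → ℝ) {n : ℕ}
    (z : Fin n → Fin (dim 0) → ℝ) (W : ℝ → Layers dim) : Prop :=
  ∀ t : ℝ, 0 ≤ t → ∀ k < L, ∀ i j,
    HasDerivAt (fun s => W s k i j) (-(gradLayer L ℓ' z (W t) k i j)) t

/-- The initialization-dependent constant `D`. -/
def Dconst {dim : ℕ → ℕ} (L : ℕ) (W0 : Layers dim) : ℝ :=
  (⨆ k : Fin L, frobNorm (W0 k) ^ 2) - frobNorm (W0 (L-1)) ^ 2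
    + ∑ k ∈ Finset.range (L-1),
        specNorm (W0 k * (W0 k)ᵀ - (W0 (k+1))ᵀ * W0 (k+1))

/-- Euclidean norm of a parameter tuple (all entries of the first `L` layers concatenated). -/
def paramNorm {dim : ℕ → ℕ} (L : ℕ) (V : Layers dim) : ℝ :=
  Real.sqrt (∑ k ∈ Finset.range L, frobNorm (V k) ^ 2)

/-- Squared Euclidean norm of the full gradient `∇R(W)`. -/
def gradNormSq {dim : ℕ → ℕ} (L : ℕ) (ℓ' : ℝ → ℝ) {n : ℕ}
    (z : Fin n → Fin (dim 0) → ℝ) (W : Layers dim) : ℝ :=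
  ∑ k ∈ Finset.range L, frobNorm (gradLayer L ℓ' z W k) ^ 2

/-- The data-dependent constant `α = min_{‖ξ‖=1, ξ ⟂ ū} max_{i ∈ S} ⟨ξ, zᵢ⟩`,
where `S` is the set of support vectors. -/
def alphaConst {n d : ℕ} (z : Fin n → Fin d → ℝ) (ubar : Fin d → ℝ) (γ : ℝ) : ℝ :=
  sInf {c : ℝ | ∃ ξ : Fin d → ℝ, vecNorm ξ = 1 ∧ ξ ⬝ᵥ ubar = 0 ∧
    c = sSup {r : ℝ | ∃ i : Fin n, ubar ⬝ᵥ z i = γ ∧ r = ξ ⬝ᵥ z i}}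

/-- Orthogonal projection onto the orthogonal complement of `span(ū)` (for `ū` a unit vector). -/
def projPerp {d : ℕ} (ubar : Fin d → ℝ) (w : Fin d → ℝ) : Fin d → ℝ :=
  w - (w ⬝ᵥ ubar) • ubar

/-! ### Frobenius and Euclidean norms -/

lemma frobNorm_nonneg {m n : Type*} [Fintype m] [Fintype n] (M : Matrix m n ℝ) :
    0 ≤ frobNorm M := Real.sqrt_nonneg _

lemma frobNorm_sq {m n : Type*} [Fintype m] [Fintype n] (M : Matrix m n ℝ) :
    frobNorm M ^ 2 = ∑ i, ∑ j, (M i j) ^ 2 :=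
  Real.sq_sqrt (Finset.sum_nonneg fun _ _ => Finset.sum_nonneg fun _ _ => sq_nonneg _)

lemma frobNorm_sq_eq_trace {m n : Type*} [Fintype m] [Fintype n] (M : Matrix m n ℝ) :
    frobNorm M ^ 2 = (Mᵀ * M).trace := by
  rw [frobNorm_sq, Finset.sum_comm]
  simp [Matrix.trace, Matrix.mul_apply, pow_two]

lemma frobNorm_mul_le {l m n : Type*} [Fintype l] [Fintype m] [Fintype n]
    (A : Matrix l m ℝ) (B : Matrix m n ℝ) :
    frobNorm (A * B) ≤ frobNorm A * frobNorm B := by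
  have h := Matrix.frobenius_norm_mul A B
  simp only [Matrix.frobenius_norm_def, Real.norm_eq_abs, Real.rpow_two, sq_abs,
    ← Real.sqrt_eq_rpow] at h
  exact h

lemma frobNorm_pos_of_ne_zero {m n : Type*} [Fintype m] [Fintype n] {M : Matrix m n ℝ}
    (h : M ≠ 0) : 0 < frobNorm M := by
  obtain ⟨i, j, hij⟩ : ∃ i j, M i j ≠ 0 := by
    by_contra! hc
    exact h (Matrix.ext hc)
  refine Real.sqrt_pos.2 (Finset.sum_pos' (fun _ _ => Finset.sum_nonneg fun _ _ => sq_nonneg _)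
    ⟨i, Finset.mem_univ _, Finset.sum_pos' (fun _ _ => sq_nonneg _) ⟨j, Finset.mem_univ _, ?_⟩⟩)
  positivity

lemma abs_dotProduct_le {m : Type*} [Fintype m] (v w : m → ℝ) :
    |v ⬝ᵥ w| ≤ vecNorm v * vecNorm w := by
  refine abs_le.2 ⟨?_, Real.sum_mul_le_sqrt_mul_sqrt _ _ _⟩
  have h := Real.sum_mul_le_sqrt_mul_sqrt Finset.univ (fun i => -v i) w
  simp only [neg_sq, neg_mul, Finset.sum_neg_distrib] at h
  have h' : -(v ⬝ᵥ w) ≤ vecNorm v * vecNorm w := h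
  linarith

lemma vecNorm_smul_sign {m : Type*} [Fintype m] {c : ℝ} (hc : c = 1 ∨ c = -1) (v : m → ℝ) :
    vecNorm (c • v) = vecNorm v := by
  rcases hc with rfl | rfl <;> simp [vecNorm]

/-! ### Partial products of the layers -/

lemma prodFrom_of_lt {dim : ℕ → ℕ} {L : ℕ} (W : Layers dim) {j : ℕ} (h : j < L) :
    prodFrom L W j = prodFrom L W (j + 1) * W j := by
  rw [prodFrom, dif_pos h]

lemma prodFrom_self {dim : ℕ → ℕ} (L : ℕ) (W : Layers dim) : prodFrom L W L = 1 := by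
  rw [prodFrom, dif_neg (lt_irrefl L)]
  ext i j
  simp [Matrix.one_apply, Fin.ext_iff]

lemma prodFrom_mul_prodUpTo {dim : ℕ → ℕ} {L : ℕ} (W : Layers dim) :
    ∀ j ≤ L, prodFrom L W j * prodUpTo W j = prodFrom L W 0
  | 0, _ => by simp [prodUpTo]
  | j + 1, h => by
    rw [prodUpTo, ← Matrix.mul_assoc, ← prodFrom_of_lt W h]
    exact prodFrom_mul_prodUpTo W j (by omega)

lemma prodUpTo_eq {dim : ℕ → ℕ} {L : ℕ} (W : Layers dim) {j : ℕ} (h : j ≤ L) :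
    prodUpTo W L = prodFrom L W j * prodUpTo W j := by
  rw [prodFrom_mul_prodUpTo W j h, ← prodFrom_mul_prodUpTo W L le_rfl, prodFrom_self,
    Matrix.one_mul]

lemma frobNorm_prodUpTo_le {dim : ℕ → ℕ} {L : ℕ} {W : Layers dim} {R : ℝ} (hR : 0 ≤ R)
    (h : ∀ k < L, frobNorm (W k) ≤ R) :
    ∀ j ≤ L, frobNorm (prodUpTo W j) ≤
      R ^ j * frobNorm (1 : Matrix (Fin (dim 0)) (Fin (dim 0)) ℝ)
  | 0, _ => by simp [prodUpTo]
  | j + 1, hj => by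
    have ih := frobNorm_prodUpTo_le hR h j (by omega)
    calc frobNorm (prodUpTo W (j + 1)) ≤ frobNorm (W j) * frobNorm (prodUpTo W j) :=
          frobNorm_mul_le _ _
      _ ≤ R * (R ^ j * frobNorm (1 : Matrix (Fin (dim 0)) (Fin (dim 0)) ℝ)) :=
          mul_le_mul (h j (by omega)) ih (frobNorm_nonneg _) hR
      _ = _ := by ring

/-- Since the output dimension is one, `w_prod` is the single row of `W_{L-1} ⋯ W_0`. -/
lemma vecNorm_wprod {dim : ℕ → ℕ} {L : ℕ} (hdimL : dim L = 1) (W : Layers dim) :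
    vecNorm (wprod L W) = frobNorm (prodUpTo W L) := by
  have : Subsingleton (Fin (dim L)) := by rw [hdimL]; infer_instance
  have a : Fin (dim L) := ⟨0, by omega⟩
  simp [vecNorm, frobNorm, wprod, Fintype.sum_subsingleton _ a]

/-- The bottom-layer gradient is the rank-one matrix formed from the row `W_{L-1} ⋯ W_1` and the
gradient of the risk at the predictor, so its norm is the product of theirs. -/
lemma frobNorm_gradLayer_zero {dim : ℕ → ℕ} {L n : ℕ} (hdimL : dim L = 1) (ℓ' : ℝ → ℝ)
    (z : Fin n → Fin (dim 0) → ℝ) (W : Layers dim) :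
    frobNorm (gradLayer L ℓ' z W 0) =
      frobNorm (prodFrom L W 1) * vecNorm (gradRiskV ℓ' z (wprod L W)) := by
  have : Subsingleton (Fin (dim L)) := by rw [hdimL]; infer_instance
  have a : Fin (dim L) := ⟨0, by omega⟩
  have hent : ∀ i j, gradLayer L ℓ' z W 0 i j =
      prodFrom L W 1 a i * gradRiskV ℓ' z (wprod L W) j := by
    intro i j
    simp [gradLayer, prodUpTo, Matrix.mul_apply, Matrix.one_apply, Fintype.sum_subsingleton _ a]
  simp only [frobNorm, vecNorm, hent, Fintype.sum_subsingleton _ a, mul_pow, ← Finset.mul_sum,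
    ← Finset.sum_mul]
  exact Real.sqrt_mul (Finset.sum_nonneg fun _ _ => sq_nonneg _) _

/-! ### The energy identity -/

/-- Derivative of the partial product `W_{j-1} ⋯ W_0` in the direction `V`, by the Leibniz rule. -/
def prodDeriv {dim : ℕ → ℕ} (W V : Layers dim) : ∀ j : ℕ, Matrix (Fin (dim j)) (Fin (dim 0)) ℝ
  | 0 => 0
  | (j+1) => V j * prodUpTo W j + W j * prodDeriv W V j

lemma hasDerivAt_prodUpTo {dim : ℕ → ℕ} {L : ℕ} {W : ℝ → Layers dim} {V : Layers dim} {t : ℝ}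
    (h : ∀ k < L, ∀ i j, HasDerivAt (fun s => W s k i j) (V k i j) t) :
    ∀ j ≤ L, ∀ a b,
      HasDerivAt (fun s => prodUpTo (W s) j a b) (prodDeriv (W t) V j a b) t
  | 0, _, a, b => by simpa [prodUpTo, prodDeriv] using hasDerivAt_const t _
  | j + 1, hj, a, b => by
    have ih := hasDerivAt_prodUpTo h j (by omega)
    simp only [prodUpTo, prodDeriv, Matrix.mul_apply, Matrix.add_apply, ← Finset.sum_add_distrib]
    exact HasDerivAt.fun_sum fun c _ => (h j (by omega) a c).mul (ih c b)

/-- Closed form of the Leibniz derivative, after completing it with the remaining layers. -/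
lemma prodFrom_mul_prodDeriv {dim : ℕ → ℕ} {L : ℕ} (W V : Layers dim) :
    ∀ j ≤ L, prodFrom L W j * prodDeriv W V j =
      ∑ k ∈ Finset.range j, prodFrom L W (k + 1) * V k * prodUpTo W k
  | 0, _ => by simp [prodDeriv]
  | j + 1, hj => by
    rw [Finset.sum_range_succ, ← prodFrom_mul_prodDeriv W V j (by omega), prodDeriv,
      Matrix.mul_add, ← Matrix.mul_assoc, ← Matrix.mul_assoc, ← prodFrom_of_lt W hj, add_comm]

/-- Along the direction `-∇R(W)`, the directional derivative of the risk is `-‖∇R(W)‖²`. -/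
lemma gradRiskV_dotProduct_prodDeriv {dim : ℕ → ℕ} {L n : ℕ} (ℓ' : ℝ → ℝ)
    (z : Fin n → Fin (dim 0) → ℝ) (W : Layers dim) :
    (gradRiskV ℓ' z (wprod L W) ⬝ᵥ
      fun j => ∑ a, prodDeriv W (fun k => -gradLayer L ℓ' z W k) L a j)
      = -gradNormSq L ℓ' z W := by
  set g := gradRiskV ℓ' z (wprod L W) with hg
  set G : Matrix (Fin (dim L)) (Fin (dim 0)) ℝ := Matrix.of fun _ j => g j with hG
  have h1 : ∀ P : Matrix (Fin (dim L)) (Fin (dim 0)) ℝ,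
      (g ⬝ᵥ fun j => ∑ a, P a j) = (Gᵀ * P).trace := by
    intro P
    simp [Matrix.trace, Matrix.mul_apply, dotProduct, hG, Finset.mul_sum]
  have h2 := prodFrom_mul_prodDeriv W (fun k => -gradLayer L ℓ' z W k) L le_rfl
  rw [prodFrom_self, Matrix.one_mul] at h2
  rw [h1, h2, Matrix.mul_sum, Matrix.trace_sum, gradNormSq, ← Finset.sum_neg_distrib]
  refine Finset.sum_congr rfl fun k _ => ?_
  have hT : (gradLayer L ℓ' z W k)ᵀ = prodUpTo W k * Gᵀ * prodFrom L W (k + 1) := by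
    simp only [gradLayer, Matrix.transpose_mul, Matrix.transpose_transpose, Matrix.mul_assoc]
    rfl
  rw [frobNorm_sq_eq_trace, hT, ← Matrix.mul_assoc, Matrix.trace_mul_comm, Matrix.mul_neg,
    Matrix.mul_neg, Matrix.mul_neg, Matrix.trace_neg]
  simp only [Matrix.mul_assoc]

lemma hasDerivAt_riskW {dim : ℕ → ℕ} {L n : ℕ} {z : Fin n → Fin (dim 0) → ℝ} {ℓ ℓ' : ℝ → ℝ}
    (hderiv : ∀ s : ℝ, HasDerivAt ℓ (ℓ' s) s) {W : ℝ → Layers dim}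
    (hflow : IsGradientFlow L ℓ' z W) {t : ℝ} (ht : 0 ≤ t) :
    HasDerivAt (fun s => riskW L ℓ z (W s)) (-gradNormSq L ℓ' z (W t)) t := by
  have hP := hasDerivAt_prodUpTo (V := fun k => -gradLayer L ℓ' z (W t) k) (hflow t ht) L le_rfl
  set P' := prodDeriv (W t) (fun k => -gradLayer L ℓ' z (W t) k) L with hP'
  have hw : ∀ j, HasDerivAt (fun s => wprod L (W s) j) (∑ a, P' a j) t :=
    fun j => HasDerivAt.fun_sum fun a _ => hP a j
  have hdot : ∀ i, HasDerivAt (fun s => wprod L (W s) ⬝ᵥ z i)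
      ((fun j => ∑ a, P' a j) ⬝ᵥ z i) t :=
    fun i => HasDerivAt.fun_sum fun j _ => (hw j).mul_const (z i j)
  have hr : HasDerivAt (fun s => riskW L ℓ z (W s))
      ((n : ℝ)⁻¹ * ∑ i, ℓ' (wprod L (W t) ⬝ᵥ z i) * ((fun j => ∑ a, P' a j) ⬝ᵥ z i)) t :=
    (HasDerivAt.fun_sum fun i _ =>
      (hderiv (wprod L (W t) ⬝ᵥ z i)).comp t (hdot i)).const_mul _
  convert hr using 1
  rw [← gradRiskV_dotProduct_prodDeriv, gradRiskV, smul_dotProduct, sum_dotProduct, smul_eq_mul]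
  congr 1
  refine Finset.sum_congr rfl fun i _ => ?_
  rw [smul_dotProduct, smul_eq_mul, dotProduct_comm (z i)]

lemma gradNormSq_nonneg {dim : ℕ → ℕ} (L : ℕ) (ℓ' : ℝ → ℝ) {n : ℕ}
    (z : Fin n → Fin (dim 0) → ℝ) (W : Layers dim) : 0 ≤ gradNormSq L ℓ' z W :=
  Finset.sum_nonneg fun _ _ => sq_nonneg _

lemma frobNorm_gradLayer_sq_le {dim : ℕ → ℕ} {L : ℕ} (ℓ' : ℝ → ℝ) {n : ℕ}
    (z : Fin n → Fin (dim 0) → ℝ) (W : Layers dim) {k : ℕ} (hk : k < L) :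
    frobNorm (gradLayer L ℓ' z W k) ^ 2 ≤ gradNormSq L ℓ' z W :=
  Finset.single_le_sum (f := fun k => frobNorm (gradLayer L ℓ' z W k) ^ 2)
    (fun _ _ => sq_nonneg _) (Finset.mem_range.2 hk)

lemma antitoneOn_riskW {dim : ℕ → ℕ} {L n : ℕ} {z : Fin n → Fin (dim 0) → ℝ} {ℓ ℓ' : ℝ → ℝ}
    (hderiv : ∀ s : ℝ, HasDerivAt ℓ (ℓ' s) s) {W : ℝ → Layers dim}
    (hflow : IsGradientFlow L ℓ' z W) :
    AntitoneOn (fun s => riskW L ℓ z (W s)) (Set.Ici 0) := by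
  refine antitoneOn_of_hasDerivWithinAt_nonpos (convex_Ici 0)
    (f' := fun t => -gradNormSq L ℓ' z (W t))
    (fun t ht => (hasDerivAt_riskW hderiv hflow ht).continuousAt.continuousWithinAt) ?_ ?_
  · intro t ht
    exact (hasDerivAt_riskW hderiv hflow (interior_subset ht)).hasDerivWithinAt
  · intro t _
    exact neg_nonpos.2 (gradNormSq_nonneg _ _ _ _)

/-- A nonzero initial gradient forces the risk to decrease strictly during the first unit of
time. -/
lemma riskW_one_lt {dim : ℕ → ℕ} {L n : ℕ} {z : Fin n → Fin (dim 0) → ℝ} {ℓ ℓ' : ℝ → ℝ}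
    (hderiv : ∀ s : ℝ, HasDerivAt ℓ (ℓ' s) s) {W : ℝ → Layers dim}
    (hflow : IsGradientFlow L ℓ' z W)
    (hinit_grad : ∃ k < L, gradLayer L ℓ' z (W 0) k ≠ 0) :
    riskW L ℓ z (W 1) < riskW L ℓ z (W 0) := by
  have hanti := antitoneOn_riskW hderiv hflow
  refine lt_of_le_of_ne (hanti (Set.mem_Ici.2 le_rfl) (Set.mem_Ici.2 zero_le_one) zero_le_one) ?_
  intro heq
  -- Otherwise the risk is constant on `[0, 1]`, and its derivative at `0` vanishes.
  have hconst : ∀ s ∈ Set.Icc (0 : ℝ) 1, riskW L ℓ z (W s) = riskW L ℓ z (W 0) := fun s hs =>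
    le_antisymm (hanti (Set.mem_Ici.2 le_rfl) (Set.mem_Ici.2 hs.1) hs.1)
      (heq ▸ hanti (Set.mem_Ici.2 hs.1) (Set.mem_Ici.2 zero_le_one) hs.2)
  have h0 : (0 : ℝ) ∈ Set.Icc (0 : ℝ) 1 := ⟨le_rfl, zero_le_one⟩
  have hd0 : HasDerivWithinAt (fun s => riskW L ℓ z (W s)) 0 (Set.Icc 0 1) 0 :=
    (hasDerivWithinAt_const 0 _ (riskW L ℓ z (W 0))).congr hconst rfl
  have huniq := (uniqueDiffOn_Icc (zero_lt_one' ℝ) 0 h0).eq_deriv _ hd0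
    (hasDerivAt_riskW hderiv hflow le_rfl).hasDerivWithinAt
  obtain ⟨k, hk, hne⟩ := hinit_grad
  have h1 := frobNorm_gradLayer_sq_le ℓ' z (W 0) hk
  have h2 := pow_pos (frobNorm_pos_of_ne_zero hne) 2
  linarith

lemma riskW_nonneg {dim : ℕ → ℕ} {L n : ℕ} {z : Fin n → Fin (dim 0) → ℝ} {ℓ : ℝ → ℝ}
    (hℓ : ∀ s, 0 ≤ ℓ s) (W : Layers dim) : 0 ≤ riskW L ℓ z W :=
  mul_nonneg (by positivity) (Finset.sum_nonneg fun _ _ => hℓ _)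

/-! ### Lower bound on the bottom-layer gradient -/

/-- Separability keeps the gradient of the risk away from zero on bounded sets of predictors:
its component along `-usep` is an average of the positive numbers `-ℓ'(⟨w, zᵢ⟩) ⟨usep, zᵢ⟩`. -/
lemma exists_le_vecNorm_gradRiskV {n d : ℕ} (hn : 0 < n) {z : Fin n → Fin d → ℝ}
    (hz : ∀ i, vecNorm (z i) ≤ 1) {usep : Fin d → ℝ} (husep_unit : vecNorm usep = 1)
    (husep : ∀ i, 0 < usep ⬝ᵥ z i) {ℓ' : ℝ → ℝ} (hcont : Continuous ℓ') (hneg : ∀ s, ℓ' s < 0)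
    {K : ℝ} (hK : 0 ≤ K) :
    ∃ c : ℝ, 0 < c ∧ ∀ w : Fin d → ℝ, vecNorm w ≤ K → c ≤ vecNorm (gradRiskV ℓ' z w) := by
  obtain ⟨s₀, -, hs₀⟩ := (isCompact_Icc (a := -K) (b := K)).exists_isMaxOn
    ⟨0, by constructor <;> linarith⟩ hcont.continuousOn
  have : Nonempty (Fin n) := ⟨⟨0, hn⟩⟩
  refine ⟨(n : ℝ)⁻¹ * ∑ i, -ℓ' s₀ * (usep ⬝ᵥ z i), ?_, fun w hw => ?_⟩
  · refine mul_pos (by positivity) (Finset.sum_pos (fun i _ => ?_) Finset.univ_nonempty)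
    exact mul_pos (neg_pos.2 (hneg s₀)) (husep i)
  have h1 : (n : ℝ)⁻¹ * ∑ i, -ℓ' s₀ * (usep ⬝ᵥ z i) ≤ -(usep ⬝ᵥ gradRiskV ℓ' z w) := by
    have hexp : -(usep ⬝ᵥ gradRiskV ℓ' z w) =
        (n : ℝ)⁻¹ * ∑ i, -ℓ' (w ⬝ᵥ z i) * (usep ⬝ᵥ z i) := by
      simp [gradRiskV, dotProduct_smul, dotProduct_sum, Finset.sum_neg_distrib]
    rw [hexp]
    refine mul_le_mul_of_nonneg_left (Finset.sum_le_sum fun i _ => ?_) (by positivity)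
    refine mul_le_mul_of_nonneg_right (neg_le_neg (hs₀ ?_)) (husep i).le
    have hvz : |w ⬝ᵥ z i| ≤ K := (abs_dotProduct_le w (z i)).trans <|
      (mul_le_of_le_one_right (Real.sqrt_nonneg _) (hz i)).trans hw
    exact abs_le.1 hvz
  have h2 := abs_dotProduct_le usep (gradRiskV ℓ' z w)
  rw [husep_unit, one_mul] at h2
  exact h1.trans ((neg_le_abs _).trans h2)

/-- If the risk is below `ℓ 0` by a fixed margin, then some data point is classified with a fixed
positive margin, so the predictor is not small. -/
lemma exists_le_vecNorm_of_risk_le {n d : ℕ} (hn : 0 < n) {z : Fin n → Fin d → ℝ}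
    (hz : ∀ i, vecNorm (z i) ≤ 1) {ℓ : ℝ → ℝ} (hℓc : Continuous ℓ) (hℓ : StrictAnti ℓ)
    {r : ℝ} (hr : r < ℓ 0) :
    ∃ s : ℝ, 0 < s ∧ ∀ w : Fin d → ℝ, riskV ℓ z w ≤ r → s ≤ vecNorm w := by
  have : Nonempty (Fin n) := ⟨⟨0, hn⟩⟩
  obtain ⟨s, hs, hrs⟩ : ∃ s : ℝ, 0 < s ∧ r < ℓ s := by
    have h := ((hℓc.tendsto 0).eventually (lt_mem_nhds hr)).filter_mono
      (nhdsWithin_le_nhds (s := Set.Ioi 0))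
    obtain ⟨s, h1, h2⟩ := (h.and self_mem_nhdsWithin).exists
    exact ⟨s, h2, h1⟩
  refine ⟨s, hs, fun w hw => ?_⟩
  by_contra! hlt
  have hsmall : ∀ i, ℓ s ≤ ℓ (w ⬝ᵥ z i) := fun i => hℓ.antitone <|
    (le_abs_self _).trans <| (abs_dotProduct_le w (z i)).trans <|
      (mul_le_of_le_one_right (Real.sqrt_nonneg _) (hz i)).trans hlt.le
  have havg : ℓ s ≤ riskV ℓ z w := by
    have hsum := Finset.card_nsmul_le_sum Finset.univ (fun i => ℓ (w ⬝ᵥ z i)) (ℓ s)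
      fun i _ => hsmall i
    rw [Finset.card_univ, Fintype.card_fin, nsmul_eq_mul] at hsum
    have hn' : (0 : ℝ) < n := by exact_mod_cast hn
    rw [riskV, inv_mul_eq_div, le_div_iff₀ hn', mul_comm]
    exact hsum
  linarith

lemma exists_le_frobNorm_gradLayer_zero {dim : ℕ → ℕ} {L n : ℕ} (hL : 1 ≤ L) (hdimL : dim L = 1)
    (hn : 0 < n) {z : Fin n → Fin (dim 0) → ℝ} (hz : ∀ i, vecNorm (z i) ≤ 1)
    {usep : Fin (dim 0) → ℝ} (husep_unit : vecNorm usep = 1) (husep : ∀ i, 0 < usep ⬝ᵥ z i)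
    {ℓ ℓ' : ℝ → ℝ} (hℓc : Continuous ℓ) (hℓ : StrictAnti ℓ)
    (hcont : Continuous ℓ') (hneg : ∀ s, ℓ' s < 0) {r : ℝ} (hr : r < ℓ 0)
    {R : ℝ} (hR : 0 < R) :
    ∃ ε : ℝ, 0 < ε ∧ ∀ W : Layers dim, riskW L ℓ z W ≤ r →
      (∀ k < L, frobNorm (W k) ≤ R) → ε ≤ frobNorm (gradLayer L ℓ' z W 0) := by
  obtain ⟨c, hc, hgrad⟩ := exists_le_vecNorm_gradRiskV hn hz husep_unit husep hcont hneg
    (mul_nonneg (pow_nonneg hR.le L)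
      (frobNorm_nonneg (1 : Matrix (Fin (dim 0)) (Fin (dim 0)) ℝ)))
  obtain ⟨s, hs, hpred⟩ := exists_le_vecNorm_of_risk_le hn hz hℓc hℓ hr
  refine ⟨s / R * c, by positivity, fun W hW hB => ?_⟩
  have htop : s / R ≤ frobNorm (prodFrom L W 1) := by
    rw [div_le_iff₀ hR]
    calc s ≤ vecNorm (wprod L W) := hpred _ hW
      _ = frobNorm (prodFrom L W 1 * prodUpTo W 1) := by
        rw [vecNorm_wprod hdimL, prodUpTo_eq W hL]
      _ ≤ frobNorm (prodFrom L W 1) * frobNorm (prodUpTo W 1) := frobNorm_mul_le _ _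
      _ ≤ frobNorm (prodFrom L W 1) * R := by
        refine mul_le_mul_of_nonneg_left ?_ (frobNorm_nonneg _)
        simpa [prodUpTo] using hB 0 hL
  rw [frobNorm_gradLayer_zero hdimL]
  refine mul_le_mul htop (hgrad _ ?_) hc.le (frobNorm_nonneg _)
  rw [vecNorm_wprod hdimL]
  exact frobNorm_prodUpTo_le hR.le hB L le_rfl

/-! ### Integrability of the squared gradient norm -/

/-- The squared gradient norm is the rate of decrease of the risk, which is monotone along the flow
and bounded below by zero. -/
lemma integrableOn_gradNormSq {dim : ℕ → ℕ} {L n : ℕ} {z : Fin n → Fin (dim 0) → ℝ}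
    {ℓ ℓ' : ℝ → ℝ} (hderiv : ∀ s : ℝ, HasDerivAt ℓ (ℓ' s) s) (hℓ : ∀ s, 0 ≤ ℓ s)
    {W : ℝ → Layers dim} (hflow : IsGradientFlow L ℓ' z W) :
    MeasureTheory.IntegrableOn (fun t => gradNormSq L ℓ' z (W t)) (Set.Ioi 0) := by
  have hanti : Antitone fun t => riskW L ℓ z (W (max t 0)) := fun s t hst =>
    antitoneOn_riskW hderiv hflow (Set.mem_Ici.2 (le_max_right s 0))
      (Set.mem_Ici.2 (le_max_right t 0)) (max_le_max_right 0 hst)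
  have hlim := tendsto_atTop_ciInf hanti
    ⟨0, by rintro _ ⟨t, rfl⟩; exact riskW_nonneg hℓ _⟩
  have hlim' := (hlim.congr' (f₂ := fun t => riskW L ℓ z (W t)) (by
    filter_upwards [eventually_ge_atTop (0 : ℝ)] with t ht
    rw [max_eq_left ht])).neg
  refine MeasureTheory.integrableOn_Ioi_deriv_of_nonneg (g := fun t => -riskW L ℓ z (W t))
    (hasDerivAt_riskW hderiv hflow le_rfl).continuousAt.neg.continuousWithinAt ?_ ?_ hlim'
  · intro t ht
    simpa using (hasDerivAt_riskW hderiv hflow (le_of_lt ht)).fun_neg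
  · intro t _
    exact gradNormSq_nonneg _ _ _ _

theorem stmt1
    (dim : ℕ → ℕ) (L n : ℕ) (hL : 1 ≤ L) (hdimL : dim L = 1) (hn : 0 < n)
    (x : Fin n → Fin (dim 0) → ℝ) (y : Fin n → ℝ) (z : Fin n → Fin (dim 0) → ℝ)
    (hx : ∀ i, vecNorm (x i) ≤ 1) (hy : ∀ i, y i = 1 ∨ y i = -1)
    (hz : ∀ i, z i = y i • x i)
    (usep : Fin (dim 0) → ℝ) (husep_unit : vecNorm usep = 1)
    (husep : ∀ i, 0 < usep ⬝ᵥ z i)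
    (ℓ ℓ' : ℝ → ℝ) (hderiv : ∀ s : ℝ, HasDerivAt ℓ (ℓ' s) s) (hcont : Continuous ℓ')
    (hneg : ∀ s : ℝ, ℓ' s < 0)
    (hbot : Tendsto ℓ atBot atTop) (htop : Tendsto ℓ atTop (nhds 0))
    (W : ℝ → Layers dim) (hflow : IsGradientFlow L ℓ' z W)
    (hinit_grad : ∃ k < L, gradLayer L ℓ' z (W 0) k ≠ 0)
    (hinit_risk : riskW L ℓ z (W 0) ≤ ℓ 0)
    :
    (∀ R : ℝ, 0 < R → ∃ ε : ℝ, 0 < ε ∧ ∀ t : ℝ, 1 ≤ t →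
        (∀ k < L, frobNorm (W t k) ≤ R) → ε ≤ frobNorm (gradLayer L ℓ' z (W t) 0))
    ∧ (∀ R : ℝ, 0 < R →
        MeasureTheory.volume {t : ℝ | 0 ≤ t ∧ ∀ k < L, frobNorm (W t k) ≤ R} < ⊤)
    ∧ (∀ C : ℝ, ∃ t : ℝ, 0 ≤ t ∧ ∃ k < L, C < frobNorm (W t k)) := by
  have hznorm : ∀ i, vecNorm (z i) ≤ 1 := fun i => by
    rw [hz i, vecNorm_smul_sign (hy i)]
    exact hx i
  have hℓc : Continuous ℓ := continuous_iff_continuousAt.2 fun s => (hderiv s).continuousAt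
  have hanti : StrictAnti ℓ := strictAnti_of_hasDerivAt_neg hderiv hneg
  have hpos : ∀ s, 0 ≤ ℓ s := hanti.antitone.le_of_tendsto htop
  have hr : riskW L ℓ z (W 1) < ℓ 0 :=
    (riskW_one_lt hderiv hflow hinit_grad).trans_le hinit_risk
  have hlower : ∀ R : ℝ, 0 < R → ∃ ε : ℝ, 0 < ε ∧ ∀ t : ℝ, 1 ≤ t →
      (∀ k < L, frobNorm (W t k) ≤ R) → ε ≤ frobNorm (gradLayer L ℓ' z (W t) 0) := by
    intro R hR
    obtain ⟨ε, hε, h⟩ := exists_le_frobNorm_gradLayer_zero hL hdimL hn hznorm husep_unit husep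
      hℓc hanti hcont hneg hr hR
    refine ⟨ε, hε, fun t ht hB => h _ ?_ hB⟩
    exact antitoneOn_riskW hderiv hflow (Set.mem_Ici.2 zero_le_one)
      (Set.mem_Ici.2 (zero_le_one.trans ht)) ht
  have hfinite : ∀ R : ℝ, 0 < R →
      MeasureTheory.volume {t : ℝ | 0 ≤ t ∧ ∀ k < L, frobNorm (W t k) ≤ R} < ⊤ := by
    intro R hR
    obtain ⟨ε, hε, h⟩ := hlower R hR
    have hmarkov := (integrableOn_gradNormSq hderiv hpos hflow).measure_norm_ge_lt_top
      (pow_pos hε 2)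
    rw [MeasureTheory.Measure.restrict_apply₀' measurableSet_Ioi.nullMeasurableSet] at hmarkov
    refine (MeasureTheory.measure_mono ?_).trans_lt (MeasureTheory.measure_union_lt_top
      (measure_Icc_lt_top (a := (0 : ℝ)) (b := 1)) hmarkov)
    rintro t ⟨ht0, hB⟩
    rcases le_or_gt t 1 with ht1 | ht1
    · exact Or.inl ⟨ht0, ht1⟩
    refine Or.inr ⟨?_, Set.mem_Ioi.2 (zero_lt_one.trans ht1)⟩
    have h1 : ε ^ 2 ≤ gradNormSq L ℓ' z (W t) :=
      (pow_le_pow_left₀ hε.le (h t ht1.le hB) 2).trans (frobNorm_gradLayer_sq_le ℓ' z (W t) hL)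
    exact h1.trans (le_abs_self _)
  refine ⟨hlower, hfinite, fun C => ?_⟩
  by_contra! hC
  have hsub : Set.Ici (0 : ℝ) ⊆ {t : ℝ | 0 ≤ t ∧ ∀ k < L, frobNorm (W t k) ≤ max C 1} :=
    fun t ht => ⟨ht, fun k hk => (hC t ht k hk).trans (le_max_left C 1)⟩
  have htop' := (MeasureTheory.measure_mono hsub).trans_lt
    (hfinite (max C 1) (lt_max_of_lt_right one_pos))
  simp at htop'

end
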